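/- arXiv:2004.06207 — 3 statements merged into one kernel-verified Lean document; each statement's English description precedes it below -/
import Mathlib

section
/- The one-dimensional variant energy constant of the pair (σ̈, ω̈) is finite: Ë = sup (1/σ̈(I)) Σ_{r≥1} ω̈(I_r)·E(I_r,ω̈)²·(Ṗ(I_r, 1_I σ̈))² < ∞, where the supremum is over all intervals I and all countable decompositions I = ∪̇_{r≥1} I_r into pairwise disjoint intervals, E(I,μ)² = (1/(2μ(I)²)) ∫_I ∫_I ((x−x')²/|I|²) dμ(x') dμ(x), and Ṗ(I,μ) = ∫_ℝ |I|/(|I|+|x−x_I|)^{3−α} dμ(x) with x_I the center of I and |I| its length. -/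
/-!
Write `δ = (1-b)/2` and `τ = δ^(2-α) ≤ 1/3`. The energy factor can be bounded by `1`, because the
stronger pivotal-type estimate already holds: the Riesz potential `∫ |x-y|^(-(2-α)) dσ̈(x)`
restricted to the atoms below a Cantor interval of generation `l` is `O((2τ)^l)`, uniformly for
`y` in the part of the Cantor set lying in that interval. Indeed, the potential at `y` of the atoms
of generation `k` is dominated by the nearest one, at distance about `δ^k`; multiplied by the weight
`(2τ²)^k` it is `O((2τ)^k)`, and `2τ ≤ 2/3` makes the sum over `k ≥ l` geometric (`sum_kernel_le`,
`stdP_le`). The Poisson kernel of `J` is dominated by the Riesz kernel with pole at any point of `J`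
(`poisson_kernel_le`).

Given `I` with `σ̈(I) > 0`, let `l` be the first generation of which `I` contains a gap center. Since
distinct Cantor intervals of one generation are separated by a gap center of an earlier generation,
all atoms in `I`, and all of `I ∩ E_b`, lie in a single Cantor interval of generation `l`
(`index_eq_of_minimal`). Hence every Poisson integral in the sum is `O((2τ)^l)`, while
`Σ_r ω̈(I_r) = ω̈(I) ≤ 2^(-l)`, and the sum is at most a constant times
`2^(-l) (2τ)^(2l) = (2τ²)^l ≤ σ̈(I)`.
-/

open MeasureTheory Set ENNReal Filter

noncomputable section

/-- The length ratio `δ = (1-b)/2` of the middle-`b` Cantor construction. -/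
def del (b : ℝ) : ℝ := (1 - b) / 2

/-- `s₀ = δ^{-(2-α)}`, i.e. `s₀⁻¹ = ((1-b)/2)^{2-α}`. -/
def s0 (α b : ℝ) : ℝ := del b ^ (-(2 - α))

/-- Left endpoint of the generation-`k` interval of the middle-`b` Cantor construction on
`[0,1]` with `0`-based index `m` (the two children of the interval with index `m` at
generation `k` are the intervals with indices `2m` and `2m+1` at generation `k+1`). -/
def cantorLeft (b : ℝ) : ℕ → ℕ → ℝ
  | 0, _ => 0
  | k + 1, m => cantorLeft b k (m / 2) + (if m % 2 = 1 then (1 + b) / 2 * del b ^ k else 0)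

/-- The generation-`k` Cantor interval `I_j^k` (`1`-based index `j`), of length `δ^k`. -/
def cantorI (b : ℝ) (k j : ℕ) : Set ℝ :=
  Icc (cantorLeft b k (j - 1)) (cantorLeft b k (j - 1) + del b ^ k)

/-- The center `z̈_j^k` of the removed open middle gap `G_j^k` of `I_j^k`. -/
def zc (b : ℝ) (k j : ℕ) : ℝ := cantorLeft b k (j - 1) + del b ^ k / 2

/-- The left endpoint `a_j^k` of the removed open middle gap `G_j^k` of `I_j^k`. -/
def gapLeft (b : ℝ) (k j : ℕ) : ℝ := cantorLeft b k (j - 1) + del b ^ (k + 1)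

/-- The middle-`b` Cantor set `E_b = ∩_k ∪_j I_j^k`. -/
def cantorSetMid (b : ℝ) : Set ℝ := ⋂ k : ℕ, ⋃ j : Fin (2 ^ k), cantorI b k (j + 1)

/-- The weights `s_j^k = (2/s₀²)^k`. -/
def sWt (α b : ℝ) (k : ℕ) : ℝ := (2 / s0 α b ^ 2) ^ k

/-- The measure `σ̈ = Σ_{k≥0} Σ_{j=1}^{2^k} s_j^k δ_{z̈_j^k}`. -/
def sigmaM (α b : ℝ) : Measure ℝ :=
  Measure.sum fun k : ℕ => Measure.sum fun j : Fin (2 ^ k) =>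
    ENNReal.ofReal (sWt α b k) • Measure.dirac (zc b k (j + 1))

/-- `ω` is the middle-`b` Cantor measure: the (unique) Borel probability measure supported
in `[0,1]` that assigns mass `2^{-k}` to each generation-`k` Cantor interval. -/
def IsCantorMeasure (b : ℝ) (ω : Measure ℝ) : Prop :=
  IsProbabilityMeasure ω ∧ ω (Icc (0 : ℝ) 1)ᶜ = 0 ∧
    ∀ k j : ℕ, 1 ≤ j → j ≤ 2 ^ k → ω (cantorI b k j) = (2 ^ k : ℝ≥0∞)⁻¹

/-- The length of a (bounded) interval, viewed as a set. -/
def lenS (S : Set ℝ) : ℝ := sSup S - sInf S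

/-- The center of a (bounded) interval, viewed as a set. -/
def ctrS (S : Set ℝ) : ℝ := (sInf S + sSup S) / 2

/-- The standard Poisson integral `Ṗ(I,μ) = ∫ |I|/(|I|+|x-x_I|)^{3-α} dμ(x)`. -/
def stdP (α : ℝ) (S : Set ℝ) (μ : Measure ℝ) : ℝ≥0∞ :=
  ∫⁻ x, ENNReal.ofReal (lenS S / (lenS S + |x - ctrS S|) ^ (3 - α)) ∂μ

/-- The variant (reproducing) Poisson integral
`𝒫̈(I,μ) = ∫ (|I|/(|I|+|x-x_I|)²)^{2-α} dμ(x)`. -/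
def varP (α : ℝ) (S : Set ℝ) (μ : Measure ℝ) : ℝ≥0∞ :=
  ∫⁻ x, ENNReal.ofReal ((lenS S / (lenS S + |x - ctrS S|) ^ 2) ^ (2 - α)) ∂μ

/-- The energy `E(I,μ)² = (1/(2μ(I)²)) ∫_I ∫_I ((x-x')²/|I|²) dμ(x') dμ(x)`. -/
def energyE2 (S : Set ℝ) (μ : Measure ℝ) : ℝ≥0∞ :=
  (2 * μ S ^ 2)⁻¹ * ∫⁻ x in S, ∫⁻ x' in S, ENNReal.ofReal ((x - x') ^ 2 / lenS S ^ 2) ∂μ ∂μ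

/-- The fractional maximal function `M^α μ(x) = sup_{I ∋ x} μ(I)/|I|^{2-α}`. -/
def maxFn (α : ℝ) (μ : Measure ℝ) (x : ℝ) : ℝ≥0∞ :=
  ⨆ (a : ℝ) (c : ℝ) (_ : a < c) (_ : x ∈ Icc a c),
    μ (Icc a c) / ENNReal.ofReal ((c - a) ^ (2 - α))

/-- The point `ż_j^k = a_j^k + c·b·δ^k` inside the gap `G_j^k`. -/
def zdot (b c : ℝ) (k j : ℕ) : ℝ := gapLeft b k j + c * b * del b ^ k

/-- The measure `σ̇ = Σ_{k≥1} Σ_{j=1}^{2^k} s_j^k δ_{ż_j^k}`. -/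
def sigmaDot (α b c : ℝ) : Measure ℝ :=
  Measure.sum fun k : ℕ => Measure.sum fun j : Fin (2 ^ (k + 1)) =>
    ENNReal.ofReal (sWt α b (k + 1)) • Measure.dirac (zdot b c (k + 1) (j + 1))

/-! ### Geometry of the Cantor intervals -/

/-- The Cantor interval of generation `k` with `0`-based index `m`. -/
def node (b : ℝ) (k m : ℕ) : Set ℝ := Icc (cantorLeft b k m) (cantorLeft b k m + del b ^ k)

lemma cantorI_succ (b : ℝ) (k m : ℕ) : cantorI b k (m + 1) = node b k m := rfl

lemma zc_succ (b : ℝ) (k m : ℕ) : zc b k (m + 1) = cantorLeft b k m + del b ^ k / 2 := rfl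

lemma del_pos {b : ℝ} (hb2 : b < 1) : 0 < del b := by unfold del; linarith

lemma zc_mem_node {b : ℝ} (hb2 : b < 1) (k m : ℕ) : zc b k (m + 1) ∈ node b k m := by
  have := pow_pos (del_pos hb2) k
  rw [zc_succ]; constructor <;> linarith

lemma cantorLeft_even (b : ℝ) (k m : ℕ) : cantorLeft b (k + 1) (2 * m) = cantorLeft b k m := by
  have h1 : 2 * m / 2 = m := by omega
  have h2 : ¬ (2 * m % 2 = 1) := by omega
  simp only [cantorLeft, h1, h2, if_false, add_zero]

lemma cantorLeft_odd (b : ℝ) (k m : ℕ) :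
    cantorLeft b (k + 1) (2 * m + 1) = cantorLeft b k m + (1 + b) / 2 * del b ^ k := by
  have h1 : (2 * m + 1) / 2 = m := by omega
  have h2 : (2 * m + 1) % 2 = 1 := by omega
  simp only [cantorLeft, h1, h2, if_true]

lemma even_or_odd_index (m : ℕ) : m = 2 * (m / 2) ∨ m = 2 * (m / 2) + 1 := by omega

lemma del_pow_succ (b : ℝ) (k : ℕ) : del b ^ (k + 1) = (1 - b) / 2 * del b ^ k := by
  rw [pow_succ, mul_comm]; rfl

/-- The child with even index lies at least half a gap to the left of the parent's gap center. -/
lemma node_even_le {b : ℝ} {k m : ℕ} {x : ℝ} (hx : x ∈ node b (k + 1) (2 * m)) :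
    cantorLeft b k m ≤ x ∧ x ≤ zc b k (m + 1) - b / 2 * del b ^ k := by
  obtain ⟨h1, h2⟩ := hx
  rw [cantorLeft_even] at h1 h2
  rw [del_pow_succ] at h2
  rw [zc_succ]
  exact ⟨h1, by linarith⟩

/-- The child with odd index lies at least half a gap to the right of the parent's gap center. -/
lemma node_odd_ge {b : ℝ} {k m : ℕ} {x : ℝ} (hx : x ∈ node b (k + 1) (2 * m + 1)) :
    zc b k (m + 1) + b / 2 * del b ^ k ≤ x ∧ x ≤ cantorLeft b k m + del b ^ k := by
  obtain ⟨h1, h2⟩ := hx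
  rw [cantorLeft_odd] at h1 h2
  rw [del_pow_succ] at h2
  rw [zc_succ]
  exact ⟨by linarith, by linarith⟩

lemma node_succ_subset {b : ℝ} (hb0 : 0 < b) (hb2 : b < 1) (k m : ℕ) :
    node b (k + 1) m ⊆ node b k (m / 2) := by
  intro x hx
  have hd := pow_pos (del_pos hb2) k
  have hbd := mul_pos hb0 hd
  rcases even_or_odd_index m with h | h
  · rw [h] at hx
    have := node_even_le hx
    rw [zc_succ] at this
    exact ⟨this.1, by linarith⟩
  · rw [h] at hx
    have := node_odd_ge hx
    rw [zc_succ] at this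
    exact ⟨by linarith, this.2⟩

lemma node_add_subset {b : ℝ} (hb0 : 0 < b) (hb2 : b < 1) (k n m : ℕ) :
    node b (k + n) m ⊆ node b k (m / 2 ^ n) := by
  induction n generalizing m with
  | zero => simp
  | succ n ih =>
    refine (node_succ_subset hb0 hb2 (k + n) m).trans ((ih (m / 2)).trans ?_)
    rw [Nat.div_div_eq_div_mul, ← pow_succ']

/-- Two points in distinct Cantor intervals of one generation are separated by the gap center of
their last common ancestor. -/
lemma exists_zc_between {b : ℝ} (hb0 : 0 < b) (hb2 : b < 1) {l p q : ℕ} (hp : p < 2 ^ l)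
    (hq : q < 2 ^ l) (hpq : p ≠ q) {x y : ℝ} (hx : x ∈ node b l p) (hy : y ∈ node b l q) :
    ∃ i < l, ∃ r < 2 ^ i, (x < zc b i (r + 1) ∧ zc b i (r + 1) < y) ∨
      (y < zc b i (r + 1) ∧ zc b i (r + 1) < x) := by
  induction l generalizing p q with
  | zero => simp at hp hq; omega
  | succ l ih =>
    have hp' : p / 2 < 2 ^ l := by rw [pow_succ] at hp; omega
    have hq' : q / 2 < 2 ^ l := by rw [pow_succ] at hq; omega
    by_cases h : p / 2 = q / 2
    · refine ⟨l, Nat.lt_succ_self l, p / 2, hp', ?_⟩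
      have hd := mul_pos hb0 (pow_pos (del_pos hb2) l)
      rcases even_or_odd_index p with hpe | hpo <;> rcases even_or_odd_index q with hqe | hqo
      · omega
      · left
        rw [hpe] at hx; rw [hqo, ← h] at hy
        have h1 := node_even_le hx
        have h2 := node_odd_ge hy
        exact ⟨by linarith, by linarith⟩
      · right
        rw [hpo] at hx; rw [hqe, ← h] at hy
        have h1 := node_odd_ge hx
        have h2 := node_even_le hy
        exact ⟨by linarith, by linarith⟩
      · omega
    · obtain ⟨i, hi, r, hr, hh⟩ := ih hp' hq' h (node_succ_subset hb0 hb2 l p hx)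
        (node_succ_subset hb0 hb2 l q hy)
      exact ⟨i, hi.trans (Nat.lt_succ_self l), r, hr, hh⟩

lemma node_index_unique {b : ℝ} (hb0 : 0 < b) (hb2 : b < 1) {l p q : ℕ} (hp : p < 2 ^ l)
    (hq : q < 2 ^ l) {x : ℝ} (hx : x ∈ node b l p) (hy : x ∈ node b l q) : p = q := by
  by_contra h
  obtain ⟨i, -, r, -, hh | hh⟩ := exists_zc_between hb0 hb2 hp hq h hx hy <;> linarith

/-- If `I` is an interval containing the gap center with address `(l, p)` but no gap center of
an earlier generation, then all points of `I` lying in a generation-`l` Cantor interval lie in the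
one of index `p`. -/
lemma index_eq_of_minimal {b : ℝ} (hb0 : 0 < b) (hb2 : b < 1) {I : Set ℝ} (hI : I.OrdConnected)
    {l p : ℕ} (hp : p < 2 ^ l) (hpI : zc b l (p + 1) ∈ I)
    (hmin : ∀ i < l, ∀ r < 2 ^ i, zc b i (r + 1) ∉ I)
    {q : ℕ} (hq : q < 2 ^ l) {x : ℝ} (hxI : x ∈ I) (hx : x ∈ node b l q) : q = p := by
  by_contra h
  obtain ⟨i, hi, r, hr, hh | hh⟩ := exists_zc_between hb0 hb2 hq hp h hx (zc_mem_node hb2 l p)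
  · exact hmin i hi r hr (hI.out hxI hpI ⟨hh.1.le, hh.2.le⟩)
  · exact hmin i hi r hr (hI.out hpI hxI ⟨hh.1.le, hh.2.le⟩)

/-! ### The potential of one generation of atoms -/

/-- Potential estimate for the atoms of generation `l + n` below a Cantor interval of generation
`l`, seen from a point `y` of the Cantor set in that interval. Here `τ = δ^(2-α)`, and `h` is any
kernel dominated by `|x - y|^(-(2-α))`. The subtracted `2 ^ n` makes the induction close: the
child not containing `y` contributes at most `2 ^ n` atoms at distance comparable to `δ ^ l`. -/
lemma sum_kernel_le {α b : ℝ} (hb0 : 0 < b) (hb2 : b < 1)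
    (hs2 : del b ^ (2 - α) ≤ 1 / 3) {y : ℝ} (hyE : y ∈ cantorSetMid b) {h : ℝ → ℝ}
    (hh : ∀ d x : ℝ, 0 < d → d ≤ |x - y| → h x ≤ d ^ (-(2 - α))) (n l p : ℕ) (hp : p < 2 ^ l)
    (hy : y ∈ node b l p) :
    ∑ m ∈ Finset.range (2 ^ n), h (zc b (l + n) (p * 2 ^ n + m + 1)) ≤
      (b / 2) ^ (-(2 - α)) * ((del b ^ (2 - α))⁻¹) ^ l *
        (2 * ((del b ^ (2 - α))⁻¹) ^ n - 2 ^ n) := by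
  have hδ := del_pos hb2
  set T : ℝ := (del b ^ (2 - α))⁻¹ with hT
  have hτ : 0 < del b ^ (2 - α) := Real.rpow_pos_of_pos hδ _
  have hT3 : 3 ≤ T := by
    rw [hT, le_inv_comm₀ (by norm_num) hτ]; linarith
  set B : ℝ := (b / 2) ^ (-(2 - α)) with hB
  have hB0 : 0 < B := Real.rpow_pos_of_pos (by linarith) _
  have hkey : ∀ l : ℕ, (b / 2 * del b ^ l) ^ (-(2 - α)) = B * T ^ l := by
    intro l
    rw [Real.mul_rpow (by linarith) (by positivity), ← Real.rpow_natCast, ← Real.rpow_mul hδ.le,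
      mul_comm (l : ℝ), Real.rpow_mul hδ.le, Real.rpow_natCast, Real.rpow_neg hδ.le]
  -- `y` lies in one of the two children
  have hchild : ∀ l p : ℕ, p < 2 ^ l → y ∈ node b l p →
      y ∈ node b (l + 1) (2 * p) ∨ y ∈ node b (l + 1) (2 * p + 1) := by
    intro l p hp hy
    obtain ⟨m, hm⟩ := mem_iUnion.1 (mem_iInter.1 hyE (l + 1))
    rw [cantorI_succ] at hm
    have hm2 : (m : ℕ) / 2 < 2 ^ l := by have := m.2; have := pow_succ 2 l; omega
    have := node_index_unique hb0 hb2 hm2 hp (node_succ_subset hb0 hb2 l m hm) hy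
    rcases even_or_odd_index (m : ℕ) with h | h <;> rw [h, this] at hm
    · exact Or.inl hm
    · exact Or.inr hm
  induction n generalizing l p with
  | zero =>
    have hd : b / 2 * del b ^ l ≤ |zc b l (p + 1) - y| := by
      rcases hchild l p hp hy with h | h
      · have := node_even_le h
        exact le_trans (by linarith) (le_abs_self _)
      · have := node_odd_ge h
        exact le_trans (by linarith) (neg_le_abs _)
    have := hh _ _ (by positivity) hd
    rw [hkey] at this
    simp only [pow_zero, Finset.range_one, mul_one, Finset.sum_singleton, add_zero]
    linarith
  | succ n ih =>
    have hsplit : ∑ m ∈ Finset.range (2 ^ (n + 1)), h (zc b (l + (n + 1)) (p * 2 ^ (n + 1) + m + 1))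
        = ∑ m ∈ Finset.range (2 ^ n), h (zc b (l + 1 + n) (2 * p * 2 ^ n + m + 1))
          + ∑ m ∈ Finset.range (2 ^ n), h (zc b (l + 1 + n) ((2 * p + 1) * 2 ^ n + m + 1)) := by
      rw [show 2 ^ (n + 1) = 2 ^ n + 2 ^ n by ring, Finset.sum_range_add,
        show l + (n + 1) = l + 1 + n by ring]
      congr 1 <;> refine Finset.sum_congr rfl fun m _ => ?_ <;> congr 2 <;> ring
    have hpow : (2 : ℕ) ^ (l + 1) = 2 * 2 ^ l := pow_succ' 2 l
    have hmem : ∀ q m : ℕ, m < 2 ^ n →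
        zc b (l + 1 + n) (q * 2 ^ n + m + 1) ∈ node b (l + 1) q := by
      intro q m hm
      have := node_add_subset hb0 hb2 (l + 1) n _ (zc_mem_node hb2 (l + 1 + n) (q * 2 ^ n + m))
      rwa [mul_comm q, Nat.mul_add_div (by positivity), Nat.div_eq_of_lt hm, add_zero,
        mul_comm _ q] at this
    have hfar : ∀ q : ℕ, (∀ x ∈ node b (l + 1) q, b / 2 * del b ^ l ≤ |x - y|) →
        ∑ m ∈ Finset.range (2 ^ n), h (zc b (l + 1 + n) (q * 2 ^ n + m + 1)) ≤
          2 ^ n * (B * T ^ l) := by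
      intro q hq
      refine (Finset.sum_le_card_nsmul _ _ (B * T ^ l) fun m hm => ?_).trans (by simp)
      rw [← hkey]
      exact hh _ _ (by positivity) (hq _ (hmem q m (Finset.mem_range.1 hm)))
    have hclose : B * T ^ (l + 1) * (2 * T ^ n - 2 ^ n) + 2 ^ n * (B * T ^ l) ≤
        B * T ^ l * (2 * T ^ (n + 1) - 2 ^ (n + 1)) := by
      have : 0 ≤ B * T ^ l * 2 ^ n * (T - 3) :=
        mul_nonneg (by positivity) (by linarith)
      rw [pow_succ T l, pow_succ T n, pow_succ (2 : ℝ) n]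
      linarith
    have hbd : 0 < b * del b ^ l := by positivity
    rw [hsplit]
    rcases hchild l p hp hy with hy' | hy'
    · have h1 := ih (l + 1) (2 * p) (by omega) hy'
      have h2 := hfar (2 * p + 1) fun x hx => by
        have := node_odd_ge hx
        have := node_even_le hy'
        exact le_trans (by linarith) (le_abs_self _)
      linarith
    · have h1 := ih (l + 1) (2 * p + 1) (by omega) hy'
      have h2 := hfar (2 * p) fun x hx => by
        have := node_even_le hx
        have := node_odd_ge hy'
        exact le_trans (by linarith) (neg_le_abs _)
      linarith

/-! ### Poisson integrals and energies -/

lemma sWt_eq {α b : ℝ} (hb2 : b < 1) (k : ℕ) : sWt α b k = (2 * (del b ^ (2 - α)) ^ 2) ^ k := by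
  unfold sWt s0
  rw [Real.rpow_neg (del_pos hb2).le]
  congr 1
  rw [inv_pow, div_inv_eq_mul]

/-- The Poisson kernel of a bounded set `J` is dominated by the Riesz kernel with pole at any
point of `J`. -/
lemma poisson_kernel_le {α : ℝ} (hα2 : α < 2) {J : Set ℝ} (hJ : Bornology.IsBounded J) {y : ℝ}
    (hy : y ∈ J) (d x : ℝ) (hd : 0 < d) (hdx : d ≤ |x - y|) :
    lenS J / (lenS J + |x - ctrS J|) ^ (3 - α) ≤ d ^ (-(2 - α)) := by
  have h1 : sInf J ≤ y := csInf_le hJ.bddBelow hy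
  have h2 : y ≤ sSup J := le_csSup hJ.bddAbove hy
  have hlen : 0 ≤ lenS J := by unfold lenS; linarith
  have hc : |ctrS J - y| ≤ lenS J := by
    unfold ctrS lenS; rw [abs_le]; constructor <;> linarith
  have hD : d ≤ lenS J + |x - ctrS J| := by
    have := abs_sub_le x (ctrS J) y
    linarith
  have hle : lenS J ≤ lenS J + |x - ctrS J| := by linarith [abs_nonneg (x - ctrS J)]
  set D := lenS J + |x - ctrS J|
  have hD0 : 0 < D := hd.trans_le hD
  calc lenS J / D ^ (3 - α) ≤ D / D ^ (3 - α) := by gcongr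
    _ = D ^ (-(2 - α)) := by
        rw [div_eq_iff (by positivity), ← Real.rpow_add hD0]
        norm_num
    _ ≤ d ^ (-(2 - α)) := Real.rpow_le_rpow_of_nonpos hd hD (by linarith)

lemma energyE2_le_one {J : Set ℝ} (hJm : MeasurableSet J) (hJ : Bornology.IsBounded J)
    (ω : Measure ℝ) [IsProbabilityMeasure ω] : energyE2 J ω ≤ 1 := by
  have hpt : ∀ x ∈ J, ∀ x' ∈ J, ENNReal.ofReal ((x - x') ^ 2 / lenS J ^ 2) ≤ 1 := by
    intro x hx x' hx'
    rw [ENNReal.ofReal_le_one]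
    refine div_le_one_of_le₀ ?_ (sq_nonneg _)
    have h1 := csInf_le hJ.bddBelow hx
    have h2 := le_csSup hJ.bddAbove hx
    have h3 := csInf_le hJ.bddBelow hx'
    have h4 := le_csSup hJ.bddAbove hx'
    refine sq_le_sq' ?_ ?_ <;> unfold lenS <;> linarith
  have hint : ∫⁻ x in J, ∫⁻ x' in J, ENNReal.ofReal ((x - x') ^ 2 / lenS J ^ 2) ∂ω ∂ω ≤
      ω J * ω J := by
    calc _ ≤ ∫⁻ x in J, ω J ∂ω := by
          refine setLIntegral_mono' hJm fun x hx => ?_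
          refine (setLIntegral_mono' hJm (hpt x hx)).trans ?_
          simp
      _ = ω J * ω J := by simp
  unfold energyE2
  refine (mul_le_mul_right hint _).trans ?_
  have h2 : ω J * ω J ≤ 2 * ω J ^ 2 := by
    rw [sq]; exact le_mul_of_one_le_left (by simp) (by norm_num)
  exact (mul_le_mul_right h2 _).trans (ENNReal.inv_mul_le_one _)

lemma lintegral_sigmaM (α b : ℝ) (f : ℝ → ℝ≥0∞) :
    ∫⁻ x, f x ∂(sigmaM α b) = ∑' k : ℕ, ∑ m ∈ Finset.range (2 ^ k),
      ENNReal.ofReal (sWt α b k) * f (zc b k (m + 1)) := by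
  unfold sigmaM
  rw [lintegral_sum_measure]
  congr 1; ext k
  rw [lintegral_sum_measure, tsum_fintype, Finset.sum_range]
  refine Finset.sum_congr rfl fun m _ => ?_
  rw [lintegral_smul_measure, lintegral_dirac, smul_eq_mul]

/-- For `J ⊆ I` meeting the Cantor set, the Poisson integral of `1_I σ̈`
is at most a constant times `(2τ)^l`, where `l` is the first generation of an atom in `I`. -/
lemma stdP_le {α b : ℝ} (hα2 : α < 2) (hb0 : 0 < b) (hb2 : b < 1)
    (hs2 : del b ^ (2 - α) ≤ 1 / 3) {I J : Set ℝ} (hI : I.OrdConnected)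
    (hJ : Bornology.IsBounded J) (hJI : J ⊆ I) {y : ℝ} (hyE : y ∈ cantorSetMid b) (hyJ : y ∈ J)
    {l p : ℕ} (hp : p < 2 ^ l) (hpI : zc b l (p + 1) ∈ I)
    (hmin : ∀ i < l, ∀ r < 2 ^ i, zc b i (r + 1) ∉ I) :
    stdP α J ((sigmaM α b).restrict I) ≤
      ENNReal.ofReal (6 * (b / 2) ^ (-(2 - α)) * (2 * del b ^ (2 - α)) ^ l) := by
  have hy : y ∈ node b l p := by
    obtain ⟨m, hm⟩ := mem_iUnion.1 (mem_iInter.1 hyE l)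
    rw [cantorI_succ] at hm
    rwa [index_eq_of_minimal hb0 hb2 hI hp hpI hmin m.2 (hJI hyJ) hm] at hm
  have hsum := sum_kernel_le hb0 hb2 hs2 hyE (poisson_kernel_le hα2 hJ hyJ)
  set h : ℝ → ℝ := fun x => lenS J / (lenS J + |x - ctrS J|) ^ (3 - α) with hh
  have hτ : 0 < del b ^ (2 - α) := Real.rpow_pos_of_pos (del_pos hb2) _
  have hB : 0 < (b / 2) ^ (-(2 - α)) := Real.rpow_pos_of_pos (by linarith) _
  have hh0 : ∀ x, 0 ≤ h x := by
    intro x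
    have h1 := csInf_le hJ.bddBelow hyJ
    have h2 := le_csSup hJ.bddAbove hyJ
    have : 0 ≤ lenS J := by unfold lenS; linarith
    simp only [hh]; positivity
  have hs : ∀ k, 0 ≤ sWt α b k := fun k => by rw [sWt_eq hb2]; positivity
  have hres : stdP α J ((sigmaM α b).restrict I) = ∑' k : ℕ, ∑ m ∈ Finset.range (2 ^ k),
      ENNReal.ofReal (sWt α b k) *
        I.indicator (fun x => ENNReal.ofReal (h x)) (zc b k (m + 1)) := by
    rw [← lintegral_sigmaM, lintegral_indicator hI.measurableSet]
    rfl
  rw [hres]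
  set τ := del b ^ (2 - α)
  set B := (b / 2) ^ (-(2 - α))
  -- generations before `l` have no atom in `I`
  have hzero : ∀ k < l, ∑ m ∈ Finset.range (2 ^ k), ENNReal.ofReal (sWt α b k) *
        I.indicator (fun x => ENNReal.ofReal (h x)) (zc b k (m + 1)) = 0 := by
    intro k hk
    refine Finset.sum_eq_zero fun m hm => ?_
    rw [indicator_of_notMem (hmin k hk m (Finset.mem_range.1 hm)), mul_zero]
  have hterm : ∀ n : ℕ, ∑ m ∈ Finset.range (2 ^ (l + n)), ENNReal.ofReal (sWt α b (l + n)) *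
        I.indicator (fun x => ENNReal.ofReal (h x)) (zc b (l + n) (m + 1)) ≤
      ENNReal.ofReal (2 * B * (2 * τ) ^ l * (2 / 3) ^ n) := by
    intro n
    calc _ ≤ ∑ m ∈ Finset.Ico (p * 2 ^ n) (p * 2 ^ n + 2 ^ n), ENNReal.ofReal (sWt α b (l + n)) *
            I.indicator (fun x => ENNReal.ofReal (h x)) (zc b (l + n) (m + 1)) := by
          refine Finset.sum_le_sum_of_ne_zero fun m hm hne => ?_
          have hmI : zc b (l + n) (m + 1) ∈ I := by
            by_contra hc
            exact hne (by rw [indicator_of_notMem hc, mul_zero])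
          have hlt : m / 2 ^ n < 2 ^ l := by
            rw [Nat.div_lt_iff_lt_mul (by positivity), ← pow_add]
            exact Finset.mem_range.1 hm
          have hq := index_eq_of_minimal hb0 hb2 hI hp hpI hmin hlt hmI
            (node_add_subset hb0 hb2 l n m (zc_mem_node hb2 _ m))
          have h1 := Nat.div_add_mod m (2 ^ n)
          have h2 := Nat.mod_lt m (show 2 ^ n > 0 by positivity)
          rw [hq, mul_comm] at h1
          rw [Finset.mem_Ico]
          omega
      _ ≤ ∑ m ∈ Finset.Ico (p * 2 ^ n) (p * 2 ^ n + 2 ^ n),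
            ENNReal.ofReal (sWt α b (l + n) * h (zc b (l + n) (m + 1))) := by
          refine Finset.sum_le_sum fun m _ => ?_
          rw [ENNReal.ofReal_mul (hs _)]
          gcongr
          exact indicator_le_self _ _ _
      _ = ENNReal.ofReal (sWt α b (l + n) *
            ∑ m ∈ Finset.range (2 ^ n), h (zc b (l + n) (p * 2 ^ n + m + 1))) := by
          rw [Finset.sum_Ico_eq_sum_range, Nat.add_sub_cancel_left, Finset.mul_sum,
            ENNReal.ofReal_sum_of_nonneg fun m _ => mul_nonneg (hs _) (hh0 _)]
      _ ≤ _ := by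
          refine ENNReal.ofReal_le_ofReal ?_
          calc _ ≤ sWt α b (l + n) * (B * τ⁻¹ ^ l * (2 * τ⁻¹ ^ n)) := by
                refine mul_le_mul_of_nonneg_left ((hsum n l p hp hy).trans ?_) (hs _)
                refine mul_le_mul_of_nonneg_left ?_ (by positivity)
                have : (0 : ℝ) < 2 ^ n := by positivity
                linarith
            _ = 2 * B * (2 * τ) ^ l * (2 * τ) ^ n := by
                rw [sWt_eq hb2]
                have e : ∀ i : ℕ, (2 * τ ^ 2) ^ i * τ⁻¹ ^ i = (2 * τ) ^ i := by
                  intro i; rw [← mul_pow]; congr 1; field_simp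
                calc _ = 2 * B * ((2 * τ ^ 2) ^ l * τ⁻¹ ^ l) * ((2 * τ ^ 2) ^ n * τ⁻¹ ^ n) := by
                      rw [pow_add]; ring
                  _ = _ := by rw [e, e]
            _ ≤ _ := by
                gcongr
                linarith
  have hsummable : Summable fun n : ℕ => 2 * B * (2 * τ) ^ l * (2 / 3 : ℝ) ^ n :=
    (summable_geometric_of_lt_one (by norm_num) (by norm_num)).mul_left _
  rw [← ENNReal.summable.sum_add_tsum_nat_add' (k := l),
    Finset.sum_eq_zero fun k hk => hzero k (Finset.mem_range.1 hk), zero_add]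
  calc _ ≤ ∑' n : ℕ, ENNReal.ofReal (2 * B * (2 * τ) ^ l * (2 / 3 : ℝ) ^ n) := by
        refine ENNReal.tsum_le_tsum fun n => ?_
        rw [add_comm n l]
        exact hterm n
    _ = ENNReal.ofReal (6 * B * (2 * τ) ^ l) := by
        rw [← ENNReal.ofReal_tsum_of_nonneg (fun n => by positivity) hsummable, tsum_mul_left,
          tsum_geometric_of_lt_one (by norm_num) (by norm_num)]
        congr 1; ring

/-- The Cantor measure is carried by the Cantor set. -/
lemma ae_mem_cantorSetMid {b : ℝ} (hb0 : 0 < b) (hb2 : b < 1) {ω : Measure ℝ}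
    (hω : IsCantorMeasure b ω) : ω (cantorSetMid b)ᶜ = 0 := by
  obtain ⟨hprob, -, hmass⟩ := hω
  have hmeas : ∀ k m : ℕ, MeasurableSet (cantorI b k m) := fun k m => measurableSet_Icc
  unfold cantorSetMid
  rw [compl_iInter, measure_iUnion_null_iff]
  intro k
  rw [prob_compl_eq_zero_iff (MeasurableSet.iUnion fun m => hmeas _ _), measure_iUnion, tsum_fintype]
  · rw [Finset.sum_congr rfl fun (m : Fin (2 ^ k)) _ =>
      hmass k ((m : ℕ) + 1) (by omega) m.2]
    simp only [Finset.sum_const, Finset.card_univ, Fintype.card_fin, nsmul_eq_mul]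
    push_cast
    exact ENNReal.mul_inv_cancel (by positivity) (by finiteness)
  · intro m m' hne
    refine Set.disjoint_left.2 fun x hx hx' => hne (Fin.ext ?_)
    change x ∈ node b k m at hx
    change x ∈ node b k m' at hx'
    exact node_index_unique hb0 hb2 m.2 m'.2 hx hx'
  · exact fun m => hmeas _ _

lemma exists_zc_mem_of_ne_zero {α b : ℝ} {I : Set ℝ} (hI : MeasurableSet I)
    (h : sigmaM α b I ≠ 0) : ∃ k, ∃ m < 2 ^ k, zc b k (m + 1) ∈ I := by
  by_contra! hc
  refine h ?_
  rw [← lintegral_indicator_one hI, lintegral_sigmaM]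
  refine ENNReal.tsum_eq_zero.2 fun k => Finset.sum_eq_zero fun m hm => ?_
  rw [indicator_of_notMem (hc k m (Finset.mem_range.1 hm)), mul_zero]

lemma sWt_le_sigmaM {α b : ℝ} {I : Set ℝ} (hI : MeasurableSet I) {l p : ℕ} (hp : p < 2 ^ l)
    (hpI : zc b l (p + 1) ∈ I) : ENNReal.ofReal (sWt α b l) ≤ sigmaM α b I := by
  rw [← lintegral_indicator_one hI, lintegral_sigmaM]
  refine le_trans ?_ (ENNReal.le_tsum l)
  refine le_trans ?_ (Finset.single_le_sum (fun _ _ => zero_le) (Finset.mem_range.2 hp))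
  rw [indicator_of_mem hpI]
  simp

/-- The one-dimensional variant energy constant `Ë` of the pair `(σ̈, ω̈)` is finite: the
supremum over all (bounded) intervals `I` and countable decompositions `I = ∪̇_r I_r` into
pairwise disjoint intervals of
`σ̈(I)⁻¹ Σ_r ω̈(I_r)·E(I_r,ω̈)²·Ṗ(I_r, 1_I σ̈)²` is finite. -/
theorem variant_energy_finite (α b : ℝ) (hα0 : 0 ≤ α) (hα2 : α < 2) (hb1 : 1 / 3 ≤ b) (hb2 : b < 1)
    (hs1 : 1 / 9 ≤ del b ^ (2 - α)) (hs2 : del b ^ (2 - α) ≤ 1 / 3)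
    (ω : Measure ℝ) (hω : IsCantorMeasure b ω) :
    (⨆ (I : Set ℝ) (_ : I.OrdConnected) (_ : Bornology.IsBounded I) (J : ℕ → Set ℝ)
        (_ : ∀ r, (J r).OrdConnected) (_ : Pairwise (Function.onFun Disjoint J))
        (_ : I = ⋃ r, J r),
        (sigmaM α b I)⁻¹ *
          ∑' r : ℕ,
            ω (J r) * energyE2 (J r) ω * stdP α (J r) ((sigmaM α b).restrict I) ^ 2) ≠ ⊤ := by
  have hb0 : 0 < b := by linarith
  have hprob : IsProbabilityMeasure ω := hω.1
  have hE := ae_mem_cantorSetMid hb0 hb2 hω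
  have hτ : 0 < del b ^ (2 - α) := Real.rpow_pos_of_pos (del_pos hb2) _
  have hB : 0 < (b / 2) ^ (-(2 - α)) := Real.rpow_pos_of_pos (by linarith) _
  refine ne_top_of_le_ne_top
    (ENNReal.ofReal_ne_top (r := (6 * (b / 2) ^ (-(2 - α))) ^ 2)) ?_
  refine iSup_le fun I => iSup_le fun hI => iSup_le fun hIb => iSup_le fun J => iSup_le fun hJ =>
    iSup_le fun hdisj => iSup_le fun hIJ => ?_
  have hJI : ∀ r, J r ⊆ I := fun r => hIJ ▸ subset_iUnion J r
  -- when `σ̈ I = 0` the factor `(σ̈ I)⁻¹ = ⊤` is harmless: all the Poisson integrals vanish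
  by_cases hσ : sigmaM α b I = 0
  · have : (sigmaM α b).restrict I = 0 := Measure.restrict_eq_zero.2 hσ
    simp [this, stdP]
  classical
  -- the first generation with an atom in `I`
  have hex := exists_zc_mem_of_ne_zero hI.measurableSet hσ
  obtain ⟨p, hp, hpI⟩ := Nat.find_spec hex
  have hmin : ∀ i < Nat.find hex, ∀ r < 2 ^ i, zc b i (r + 1) ∉ I :=
    fun i hi r hr hr' => Nat.find_min hex hi ⟨r, hr, hr'⟩
  generalize Nat.find hex = l at hp hpI hmin
  have hωI : ω I ≤ (2 ^ l : ℝ≥0∞)⁻¹ := by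
    rw [← hω.2.2 l (p + 1) (by omega) hp, cantorI_succ]
    calc ω I ≤ ω (node b l p ∪ (cantorSetMid b)ᶜ) := by
          refine measure_mono fun x hx => ?_
          by_cases hxE : x ∈ cantorSetMid b
          · left
            obtain ⟨m, hm⟩ := mem_iUnion.1 (mem_iInter.1 hxE l)
            rw [cantorI_succ] at hm
            rwa [index_eq_of_minimal hb0 hb2 hI hp hpI hmin m.2 hx hm] at hm
          · exact Or.inr hxE
      _ ≤ ω (node b l p) + ω (cantorSetMid b)ᶜ := measure_union_le _ _
      _ = ω (node b l p) := by rw [hE, add_zero]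
  set Q : ℝ := 6 * (b / 2) ^ (-(2 - α)) * (2 * del b ^ (2 - α)) ^ l with hQ
  have hterm : ∀ r, ω (J r) * energyE2 (J r) ω * stdP α (J r) ((sigmaM α b).restrict I) ^ 2 ≤
      ω (J r) * ENNReal.ofReal Q ^ 2 := by
    intro r
    by_cases h0 : ω (J r) = 0
    · simp [h0]
    have hJb := hIb.subset (hJI r)
    obtain ⟨y, hyJ, hyE⟩ : ∃ y ∈ J r, y ∈ cantorSetMid b := by
      by_contra! hc
      exact h0 (measure_mono_null (fun x hx => hc x hx) hE)
    have h1 := energyE2_le_one (hJ r).measurableSet hJb ω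
    have h2 := stdP_le hα2 hb0 hb2 hs2 hI hJb (hJI r) hyE hyJ hp hpI hmin
    calc _ ≤ ω (J r) * 1 * ENNReal.ofReal Q ^ 2 := by gcongr
      _ = _ := by rw [mul_one]
  have hsum : ∑' r, ω (J r) * energyE2 (J r) ω * stdP α (J r) ((sigmaM α b).restrict I) ^ 2 ≤
      ENNReal.ofReal ((6 * (b / 2) ^ (-(2 - α))) ^ 2) * sigmaM α b I := by
    calc _ ≤ ∑' r, ω (J r) * ENNReal.ofReal Q ^ 2 := ENNReal.tsum_le_tsum hterm
      _ = ω I * ENNReal.ofReal Q ^ 2 := by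
          rw [ENNReal.tsum_mul_right, hIJ, measure_iUnion hdisj fun r => (hJ r).measurableSet]
      _ ≤ (2 ^ l : ℝ≥0∞)⁻¹ * ENNReal.ofReal Q ^ 2 := by gcongr
      _ = ENNReal.ofReal ((6 * (b / 2) ^ (-(2 - α))) ^ 2) * ENNReal.ofReal (sWt α b l) := by
          have h2 : (2 ^ l : ℝ≥0∞)⁻¹ = ENNReal.ofReal ((2 ^ l)⁻¹) := by
            rw [ENNReal.ofReal_inv_of_pos (by positivity), ENNReal.ofReal_pow (by norm_num)]
            norm_num
          rw [h2, ← ENNReal.ofReal_pow (by positivity), ← ENNReal.ofReal_mul (by positivity),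
            ← ENNReal.ofReal_mul (by positivity), sWt_eq hb2, hQ]
          congr 1
          -- `2^(-l) (2τ)^(2l) = (2τ²)^l`
          have e : ((2 : ℝ) ^ l)⁻¹ * ((2 * del b ^ (2 - α)) ^ l) ^ 2 =
              (2 * (del b ^ (2 - α)) ^ 2) ^ l := by
            rw [← inv_pow, ← pow_mul, mul_comm l 2, pow_mul, ← mul_pow]
            congr 1; ring
          rw [← e]; ring
      _ ≤ _ := by
          gcongr
          exact sWt_le_sigmaM hI.measurableSet hp hpI
  calc _ ≤ (sigmaM α b I)⁻¹ *
        (ENNReal.ofReal ((6 * (b / 2) ^ (-(2 - α))) ^ 2) * sigmaM α b I) := by gcongr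
    _ = ENNReal.ofReal ((6 * (b / 2) ^ (-(2 - α))) ^ 2) *
        ((sigmaM α b I)⁻¹ * sigmaM α b I) := by ring
    _ ≤ ENNReal.ofReal ((6 * (b / 2) ^ (-(2 - α))) ^ 2) * 1 := by
        gcongr
        exact ENNReal.inv_mul_le_one _
    _ = _ := mul_one _
end
end

section
/- With c the constant from the Riesz lemma, the one-dimensional Riesz testing condition fails for the pair (σ̇, ω̈): ∫_{[0,1]} (R̈(1_{[0,1]}ω̈)(x))² dσ̇(x) = ∞, where R̈μ(x) = ∫_ℝ (x−y)·|x−y|^{−(3−α)} dμ(y). -/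
/-!
The integrand at the point `ż_j^k` is at least `C₁² (s₀/2)^{2k}`, its mass is `(2/s₀²)^k`, and
there are `2^k` points of generation `k`. The product of these three quantities is exactly
`C₁²` (`generation_contribution`), so every generation contributes at least the same positive
constant and the sum over all generations diverges. Two routine facts connect this with the
integrals over `[0,1]`: the points `ż_j^k` lie in `[0,1]` (`zdot_mem`), and `ω` is carried by
`[0,1]`. The integral against a Dirac mass is its point value for every function on `ℝ`, so the
measurability of the Riesz transform is not needed.
-/

open MeasureTheory Set ENNReal Filter

noncomputable section

lemma cantorLeft_bounds {b : ℝ} (hb0 : 0 ≤ b) (hb2 : b < 1) (k : ℕ) :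
    ∀ m, 0 ≤ cantorLeft b k m ∧ cantorLeft b k m + del b ^ k ≤ 1 := by
  have hd : 0 < del b := by unfold del; linarith
  induction k with
  | zero => intro m; simp [cantorLeft]
  | succ k ih =>
    intro m
    obtain ⟨h1, h2⟩ := ih (m / 2)
    have hk : 0 < del b ^ k := pow_pos hd k
    have hs : del b ^ (k + 1) = (1 - b) / 2 * del b ^ k := by rw [pow_succ', del]
    rw [cantorLeft, hs]
    split_ifs <;> constructor <;> nlinarith

lemma zdot_mem {b c : ℝ} (hb0 : 0 ≤ b) (hb2 : b < 1) (hc0 : 0 < c) (hc1 : c < 1) (k j : ℕ) :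
    zdot b c k j ∈ Icc (0 : ℝ) 1 := by
  obtain ⟨h1, h2⟩ := cantorLeft_bounds hb0 hb2 k (j - 1)
  have hd : 0 < del b := by unfold del; linarith
  have hk : 0 < del b ^ k := pow_pos hd k
  have hs : del b ^ (k + 1) = (1 - b) / 2 * del b ^ k := by rw [pow_succ', del]
  have hcb : 0 ≤ c * b := by positivity
  have hcb' : c * b ≤ b := by nlinarith
  rw [zdot, gapLeft, hs]
  constructor <;> nlinarith

/-- The number of points of a generation, times their mass, times the square of the lower bound
for the Riesz transform there, does not depend on the generation. -/
lemma generation_contribution {s C : ℝ} (hs : 0 < s) (n : ℕ) :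
    (2 : ℝ) ^ n * ((2 / s ^ 2) ^ n * (C * (s / 2) ^ n) ^ 2) = C ^ 2 := by
  have h : (2 : ℝ) * (2 / s ^ 2) * (s / 2) ^ 2 = 1 := by field_simp
  calc _ = C ^ 2 * ((2 : ℝ) * (2 / s ^ 2) * (s / 2) ^ 2) ^ n := by
        rw [mul_pow, mul_pow, mul_pow, ← pow_mul, ← pow_mul]; ring
    _ = C ^ 2 := by rw [h]; simp

/-- With `c` the constant from the Riesz lemma, the one-dimensional Riesz testing condition
fails for the pair `(σ̇, ω̈)`: `∫_{[0,1]} (R̈(1_{[0,1]}ω̈)(x))² dσ̇(x) = ∞`, where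
`R̈μ(x) = ∫ (x-y)·|x-y|^{-(3-α)} dμ(y)`. -/
theorem riesz_testing_fails (α b : ℝ) (hα0 : 0 ≤ α) (hα2 : α < 2) (hb1 : 1 / 3 ≤ b) (hb2 : b < 1)
    (hs1 : 1 / 9 ≤ del b ^ (2 - α)) (hs2 : del b ^ (2 - α) ≤ 1 / 3)
    (ω : Measure ℝ) (hω : IsCantorMeasure b ω)
    (c C₁ : ℝ) (hc0 : 0 < c) (hc1 : c < 1) (hC₁ : 0 < C₁)
    (hriesz : ∀ k j : ℕ, 1 ≤ k → 1 ≤ j → j ≤ 2 ^ k →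
      C₁ * (s0 α b / 2) ^ k ≤
        ∫ y, (zdot b c k j - y) * |zdot b c k j - y| ^ (α - 3) ∂ω) :
    ∫⁻ x in Icc (0 : ℝ) 1,
        ENNReal.ofReal ((∫ y in Icc (0 : ℝ) 1, (x - y) * |x - y| ^ (α - 3) ∂ω) ^ 2)
      ∂(sigmaDot α b c) = ⊤ := by
  obtain ⟨-, hsupp, -⟩ := hω
  have hb0 : 0 ≤ b := by linarith
  have hs : 0 < s0 α b := Real.rpow_pos_of_pos (by unfold del; linarith) _
  have hr : ω.restrict (Icc (0 : ℝ) 1) = ω :=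
    Measure.restrict_eq_self_of_ae_mem (mem_ae_iff.2 hsupp)
  rw [hr, ← lintegral_indicator measurableSet_Icc, sigmaDot, lintegral_sum_measure]
  have key : ∀ k : ℕ, ENNReal.ofReal (C₁ ^ 2) ≤
      ∫⁻ x, (Icc (0 : ℝ) 1).indicator (fun x => ENNReal.ofReal
        ((∫ y, (x - y) * |x - y| ^ (α - 3) ∂ω) ^ 2)) x
        ∂(Measure.sum fun j : Fin (2 ^ (k + 1)) =>
          ENNReal.ofReal (sWt α b (k + 1)) • Measure.dirac (zdot b c (k + 1) (j + 1))) := by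
    intro k
    rw [lintegral_sum_measure, tsum_fintype]
    have hw : 0 ≤ sWt α b (k + 1) := by unfold sWt; positivity
    have hpt : ∀ j : Fin (2 ^ (k + 1)),
        ENNReal.ofReal (sWt α b (k + 1) * (C₁ * (s0 α b / 2) ^ (k + 1)) ^ 2) ≤
          ∫⁻ x, (Icc (0 : ℝ) 1).indicator (fun x => ENNReal.ofReal
            ((∫ y, (x - y) * |x - y| ^ (α - 3) ∂ω) ^ 2)) x
          ∂(ENNReal.ofReal (sWt α b (k + 1)) •
            Measure.dirac (zdot b c (k + 1) (j + 1))) := by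
      intro j
      rw [lintegral_smul_measure, lintegral_dirac,
        indicator_of_mem (zdot_mem hb0 hb2 hc0 hc1 _ _), smul_eq_mul, ENNReal.ofReal_mul hw]
      gcongr
      exact hriesz (k + 1) (j + 1) (by omega) (by omega) j.isLt
    refine le_trans (le_of_eq ?_) (Finset.sum_le_sum fun j _ => hpt j)
    rw [Finset.sum_const, Finset.card_univ, Fintype.card_fin, nsmul_eq_mul,
      ← generation_contribution (C := C₁) hs (k + 1), ENNReal.ofReal_mul (by positivity), sWt]
    congr 1
    rw [← ENNReal.ofReal_natCast]
    push_cast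
    rfl
  refine top_le_iff.1 (le_trans (le_of_eq ?_) (ENNReal.tsum_le_tsum key))
  rw [ENNReal.tsum_const_eq_top_of_ne_zero]
  exact (ENNReal.ofReal_pos.2 (by positivity)).ne'
end
end

section
/- The regularized fractional off-testing integral blows up as the separation height tends to zero: lim_{γ → 0⁺} ∫_{[0,1]} (∫_{[0,1]} ((x−y)² + γ²)^{−(2−α)/2} dω̈(y))² dσ̈(x) = ∞. -/
/-!
Each generation contributes a fixed amount to the testing integral. If `z` is the center of a
generation-`k` interval `I` and `γ ≤ δ^k`, then every `y ∈ I` satisfies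
`(z - y)² + γ² ≤ 2 δ^{2k}`, so the kernel is at least `s₀^k / 2` on `I` (`kernel_ge`; here
`2 - α ≤ 2` is used). Since `ω(I) = 2^{-k}`, the inner integral at `z` is at least
`s₀^k / (2 · 2^k)` (`inner_ge`), and its square times the mass `(2 / s₀²)^k` is at least
`1 / (4 · 2^k)`. Summing over the `2^k` centers gives at least `1/4` for each generation `k` with
`δ^k ≥ γ`. The number of such generations tends to infinity as `γ → 0⁺`.
-/


open MeasureTheory Set ENNReal Filter

noncomputable section

lemma cantorLeft_mem {b : ℝ} (hb1 : 1 / 3 ≤ b) (hb2 : b < 1) (k m : ℕ) :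
    0 ≤ cantorLeft b k m ∧ cantorLeft b k m + del b ^ k ≤ 1 := by
  induction k generalizing m with
  | zero => simp [cantorLeft]
  | succ k ih =>
    have hp : 0 < del b ^ k := pow_pos (del_pos hb2) k
    have hd : del b ^ (k + 1) = (1 - b) / 2 * del b ^ k := by rw [pow_succ, mul_comm]; rfl
    obtain ⟨h0, h1⟩ := ih (m / 2)
    rw [hd]
    unfold cantorLeft
    split_ifs
    · constructor <;> nlinarith
    · constructor <;> nlinarith

lemma cantorI_subset {b : ℝ} (hb1 : 1 / 3 ≤ b) (hb2 : b < 1) (k j : ℕ) :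
    cantorI b k j ⊆ Icc (0 : ℝ) 1 :=
  Icc_subset_Icc (cantorLeft_mem hb1 hb2 k (j - 1)).1 (cantorLeft_mem hb1 hb2 k (j - 1)).2

lemma zc_mem_cantorI {b : ℝ} (hb2 : b < 1) (k j : ℕ) : zc b k j ∈ cantorI b k j := by
  have hp : 0 < del b ^ k := pow_pos (del_pos hb2) k
  unfold zc cantorI
  constructor <;> linarith

lemma s0_pos {α b : ℝ} (hb2 : b < 1) : 0 < s0 α b := Real.rpow_pos_of_pos (del_pos hb2) _

/-- Below the height `δ^k`, the regularization costs the kernel at most a factor `2` on a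
generation-`k` interval. -/
lemma kernel_ge {α b γ : ℝ} (hα0 : 0 ≤ α) (hα2 : α < 2) (hb2 : b < 1) {k j : ℕ}
    (hγ : 0 < γ) (hγk : γ ≤ del b ^ k) {x y : ℝ}
    (hx : x ∈ cantorI b k j) (hy : y ∈ cantorI b k j) :
    s0 α b ^ k / 2 ≤ ((x - y) ^ 2 + γ ^ 2) ^ (-(2 - α) / 2) := by
  have hd := del_pos hb2
  have hp : 0 < del b ^ k := pow_pos hd k
  obtain ⟨hx1, hx2⟩ := hx
  obtain ⟨hy1, hy2⟩ := hy
  have hle : (x - y) ^ 2 + γ ^ 2 ≤ 2 * (del b ^ k) ^ 2 := by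
    have h1 : (x - y) ^ 2 ≤ (del b ^ k) ^ 2 := sq_le_sq' (by linarith) (by linarith)
    have h2 : γ ^ 2 ≤ (del b ^ k) ^ 2 := by gcongr
    linarith
  have hmono : (2 * (del b ^ k) ^ 2) ^ (-(2 - α) / 2) ≤
      ((x - y) ^ 2 + γ ^ 2) ^ (-(2 - α) / 2) :=
    Real.rpow_le_rpow_of_nonpos (by positivity) hle (by linarith)
  refine le_trans ?_ hmono
  have h2 : (1 / 2 : ℝ) ≤ 2 ^ (-(2 - α) / 2) := by
    calc (1 / 2 : ℝ) = 2 ^ (-1 : ℝ) := by rw [Real.rpow_neg_one]; norm_num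
      _ ≤ 2 ^ (-(2 - α) / 2) := Real.rpow_le_rpow_of_exponent_le (by norm_num) (by linarith)
  have h3 : ((del b ^ k) ^ 2) ^ (-(2 - α) / 2) = s0 α b ^ k := by
    unfold s0
    rw [← Real.rpow_natCast, ← Real.rpow_natCast, ← Real.rpow_natCast, ← Real.rpow_mul hd.le,
      ← Real.rpow_mul hd.le, ← Real.rpow_mul hd.le]
    congr 1
    push_cast
    ring
  rw [Real.mul_rpow (by norm_num) (by positivity), h3]
  have := pow_pos (s0_pos (α := α) hb2) k
  nlinarith

lemma inner_ge {α b γ : ℝ} (hα0 : 0 ≤ α) (hα2 : α < 2) (hb1 : 1 / 3 ≤ b) (hb2 : b < 1)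
    {ω : Measure ℝ} (hω : IsCantorMeasure b ω) {k j : ℕ} (hj1 : 1 ≤ j) (hj2 : j ≤ 2 ^ k)
    (hγ : 0 < γ) (hγk : γ ≤ del b ^ k) :
    ENNReal.ofReal (s0 α b ^ k / 2 * (2 ^ k)⁻¹) ≤
      ∫⁻ y in Icc (0 : ℝ) 1,
        ENNReal.ofReal (((zc b k j - y) ^ 2 + γ ^ 2) ^ (-(2 - α) / 2)) ∂ω := by
  have hs := pow_pos (s0_pos (α := α) hb2) k
  calc ENNReal.ofReal (s0 α b ^ k / 2 * (2 ^ k)⁻¹)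
      = ENNReal.ofReal (s0 α b ^ k / 2) * ω (cantorI b k j) := by
        rw [hω.2.2 k j hj1 hj2, ENNReal.ofReal_mul (by positivity),
          ENNReal.ofReal_inv_of_pos (by positivity), ENNReal.ofReal_pow (by norm_num)]
        norm_num
    _ = ∫⁻ _ in cantorI b k j, ENNReal.ofReal (s0 α b ^ k / 2) ∂ω := by
        rw [setLIntegral_const]
    _ ≤ ∫⁻ y in cantorI b k j,
          ENNReal.ofReal (((zc b k j - y) ^ 2 + γ ^ 2) ^ (-(2 - α) / 2)) ∂ω :=
        setLIntegral_mono' measurableSet_Icc fun y hy => ENNReal.ofReal_le_ofReal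
          (kernel_ge hα0 hα2 hb2 hγ hγk (zc_mem_cantorI hb2 k j) hy)
    _ ≤ _ := lintegral_mono_set (cantorI_subset hb1 hb2 k j)

/-- The weights are tuned so that the `2^k` centers of generation `k` carry a contribution
independent of `k`. -/
lemma weight_identity {α b : ℝ} (hb2 : b < 1) (k : ℕ) :
    sWt α b k * (s0 α b ^ k / 2 * (2 ^ k)⁻¹) ^ 2 = (1 / 4) * (2 ^ k)⁻¹ := by
  have hs := s0_pos (α := α) hb2
  unfold sWt
  rw [div_pow]
  field_simp
  ring

lemma setLIntegral_sigmaM {α b : ℝ} (hb1 : 1 / 3 ≤ b) (hb2 : b < 1) (F : ℝ → ℝ≥0∞) :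
    ∫⁻ x in Icc (0 : ℝ) 1, F x ∂(sigmaM α b) =
      ∑' k : ℕ, ∑ j : Fin (2 ^ k), ENNReal.ofReal (sWt α b k) * F (zc b k (j + 1)) := by
  classical
  unfold sigmaM
  rw [Measure.restrict_sum _ measurableSet_Icc, lintegral_sum_measure]
  congr 1
  ext k
  rw [Measure.restrict_sum _ measurableSet_Icc, lintegral_sum_measure, tsum_fintype]
  refine Finset.sum_congr rfl fun j _ => ?_
  rw [Measure.restrict_smul, lintegral_smul_measure, setLIntegral_dirac,
    if_pos (cantorI_subset hb1 hb2 k _ (zc_mem_cantorI hb2 k _)), smul_eq_mul]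


/-- The regularized fractional off-testing integral blows up as the separation height tends
to zero:
`lim_{γ → 0⁺} ∫_{[0,1]} (∫_{[0,1]} ((x-y)² + γ²)^{-(2-α)/2} dω̈(y))² dσ̈(x) = ∞`. -/
theorem regularized_offTesting_blows_up (α b : ℝ) (hα0 : 0 ≤ α) (hα2 : α < 2) (hb1 : 1 / 3 ≤ b) (hb2 : b < 1)
    (hs1 : 1 / 9 ≤ del b ^ (2 - α)) (hs2 : del b ^ (2 - α) ≤ 1 / 3)
    (ω : Measure ℝ) (hω : IsCantorMeasure b ω) :
    Tendsto
      (fun γ : ℝ =>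
        ∫⁻ x in Icc (0 : ℝ) 1,
            (∫⁻ y in Icc (0 : ℝ) 1,
              ENNReal.ofReal (((x - y) ^ 2 + γ ^ 2) ^ (-(2 - α) / 2)) ∂ω) ^ 2
          ∂(sigmaM α b))
      (nhdsWithin 0 (Ioi 0)) (nhds ⊤) := by
  rw [ENNReal.tendsto_nhds_top_iff_nat]
  intro n
  -- `4(n+1)` generations, each contributing `1/4`, push the integral above `n`.
  set N : ℕ := 4 * (n + 1) with hN
  have hd := del_pos hb2
  have hd1 : del b ≤ 1 := by unfold del; linarith
  have hev : ∀ᶠ γ in nhdsWithin (0 : ℝ) (Ioi 0), γ ∈ Ioo 0 (del b ^ N) :=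
    Ioo_mem_nhdsGT (pow_pos hd N)
  filter_upwards [hev] with γ hγ
  rw [setLIntegral_sigmaM hb1 hb2]
  have hgen : ∀ k ∈ Finset.range N, ENNReal.ofReal (1 / 4) ≤
      ∑ j : Fin (2 ^ k), ENNReal.ofReal (sWt α b k) *
        (∫⁻ y in Icc (0 : ℝ) 1,
          ENNReal.ofReal (((zc b k (j + 1) - y) ^ 2 + γ ^ 2) ^ (-(2 - α) / 2)) ∂ω) ^ 2 := by
    intro k hk
    have hγk : γ ≤ del b ^ k :=
      hγ.2.le.trans (pow_le_pow_of_le_one hd.le hd1 (Finset.mem_range.1 hk).le)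
    have hs := s0_pos (α := α) hb2
    calc ENNReal.ofReal (1 / 4)
        = ∑ _j : Fin (2 ^ k), ENNReal.ofReal (1 / 4 * (2 ^ k)⁻¹) := by
          rw [← ENNReal.ofReal_sum_of_nonneg fun _ _ => by positivity]
          congr 1
          rw [Finset.sum_const, Finset.card_univ, Fintype.card_fin, nsmul_eq_mul]
          push_cast
          field_simp
      _ ≤ _ := by
          refine Finset.sum_le_sum fun j _ => ?_
          rw [← weight_identity (α := α) hb2 k,
            ENNReal.ofReal_mul (by unfold sWt; positivity), ENNReal.ofReal_pow (by positivity)]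
          gcongr
          exact inner_ge hα0 hα2 hb1 hb2 hω (by omega) (by omega) hγ.1 hγk
  refine lt_of_lt_of_le ?_ ((Finset.sum_le_sum hgen).trans (ENNReal.sum_le_tsum _))
  rw [← ENNReal.ofReal_sum_of_nonneg fun _ _ => by norm_num, ← ENNReal.ofReal_natCast,
    ENNReal.ofReal_lt_ofReal_iff_of_nonneg (Nat.cast_nonneg n)]
  rw [Finset.sum_const, Finset.card_range, hN, nsmul_eq_mul]
  push_cast
  linarith
end
end
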